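/- Every sequence over a finite semigroup has a Ramseyan factorisation. -/

import Mathlib

/-!
Give each pair `i < j` the color of the factor `σ[i,j)`. Ramsey's theorem for pairs yields positions
`s 0 < s 1 < ⋯` all of whose pairs have the same color. Cutting `σ` at `0 < s 1 < s 2 < ⋯` is then a
Ramseyan factorisation: only the first factor `σ[0, s 1)` need not come from such a pair, and its
color is unconstrained.

Ramsey's theorem for a coloring `f` follows from an ultrafilter `u ≤ atTop`: each `i` has a limit
color, the value of `f i j` for `u`-many `j`, and some color `c` is the limit color of `u`-many `i`.
Given finitely many positions with limit color `c`, `u`-many `j` lie above them, have limit color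
`c` and satisfy `f i j = c` for each `i` among them, so the required sequence can be built greedily.
-/

namespace Buechi

/-- Nonempty finite strings over `α`, given as a head together with a tail. -/
abbrev NStr (α : Type*) : Type _ := α × List α

/-- The list of symbols of a nonempty string. -/
def NStr.toList {α : Type*} (s : NStr α) : List α := s.1 :: s.2

/-- The color of a nonempty string over a semigroup: the product of its symbols. -/
def col {Γ : Type*} [Semigroup Γ] (s : NStr Γ) : Γ := s.2.foldl (· * ·) s.1

/-- The string `σ[i,j) = σ i, σ (i+1), …, σ (j-1)` (meaningful for `i < j`). -/
def seg {α : Type*} (σ : ℕ → α) (i j : ℕ) : NStr α :=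
  (σ i, (List.range' (i + 1) (j - i - 1)).map σ)

/-- Starting position of the `n`-th factor of a factorisation `τ`. -/
def facStart {α : Type*} (τ : ℕ → NStr α) : ℕ → ℕ
  | 0 => 0
  | n + 1 => facStart τ n + (τ n).toList.length

/-- `τ` is a factorisation of `σ`: `σ` equals the infinite concatenation
`(τ 0)(τ 1)(τ 2)⋯`. -/
def IsFactorisation {α : Type*} (τ : ℕ → NStr α) (σ : ℕ → α) : Prop :=
  ∀ (n k : ℕ) (h : k < (τ n).toList.length),
    (τ n).toList.get ⟨k, h⟩ = σ (facStart τ n + k)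

/-- A Ramseyan factorisation of `σ`: a factorisation all of whose factors
`τ 1, τ 2, τ 3, …` have the same color. -/
def IsRamseyanFactorisation {Γ : Type*} [Semigroup Γ] (τ : ℕ → NStr Γ) (σ : ℕ → Γ) : Prop :=
  IsFactorisation τ σ ∧ ∃ c : Γ, ∀ n ≥ 1, col (τ n) = c

section Ramsey

open Filter

variable {α κ : Type*} [Finite κ]

theorem exists_eventually_eq_of_finite (u : Ultrafilter α) (g : α → κ) :
    ∃ c, ∀ᶠ a in u, g a = c := by
  obtain ⟨c, hc⟩ := (u.map g).eq_pure_of_finite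
  have hmem : {c} ∈ u.map g := hc ▸ Ultrafilter.mem_pure.2 rfl
  exact ⟨c, hmem⟩

theorem exists_strictMono_monochromatic [Preorder α] [Nonempty α] [IsDirectedOrder α]
    [NoTopOrder α] (f : α → α → κ) :
    ∃ s : ℕ → α, StrictMono s ∧ ∃ c, ∀ m n, m < n → f (s m) (s n) = c := by
  let u : Ultrafilter α := Ultrafilter.of atTop
  have hgt (i : α) : ∀ᶠ j in u, i < j := Ultrafilter.of_le atTop (eventually_gt_atTop i)
  choose limitColor hlimit using fun i ↦ exists_eventually_eq_of_finite u (f i)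
  obtain ⟨c, hc⟩ := exists_eventually_eq_of_finite u limitColor
  have extend (S : Finset α) (hS : ∀ i ∈ S, limitColor i = c) :
      ∃ j, limitColor j = c ∧ ∀ i ∈ S, i < j ∧ f i j = c := by
    have hall : ∀ᶠ j in u, ∀ i ∈ S, i < j ∧ f i j = c :=
      (eventually_all_finset S).2 fun i hi ↦ (hgt i).and (hS i hi ▸ hlimit i)
    exact (hc.and hall).exists
  obtain ⟨s, -, hs⟩ := exists_seq_of_forall_finset_exists _ _ extend
  exact ⟨s, fun m n hmn ↦ (hs m n hmn).1, c, fun m n hmn ↦ (hs m n hmn).2⟩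

end Ramsey

section Cuts

variable {α : Type*} (σ : ℕ → α)

theorem toList_seg {i j : ℕ} (hij : i < j) :
    (seg σ i j).toList = (List.range' i (j - i)).map σ := by
  obtain ⟨d, rfl⟩ := Nat.exists_eq_add_of_lt hij
  simp [NStr.toList, seg, Nat.add_assoc, List.range'_succ]

variable {t : ℕ → ℕ}

theorem facStart_seg (ht : StrictMono t) (ht₀ : t 0 = 0) (n : ℕ) :
    facStart (fun n ↦ seg σ (t n) (t (n + 1))) n = t n := by
  induction n with
  | zero => exact ht₀.symm
  | succ n ih =>
    have hlt : t n < t (n + 1) := ht n.lt_succ_self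
    simp only [facStart, ih, toList_seg σ hlt, List.length_map, List.length_range']
    omega

theorem isFactorisation_seg (ht : StrictMono t) (ht₀ : t 0 = 0) :
    IsFactorisation (fun n ↦ seg σ (t n) (t (n + 1))) σ := by
  intro n k hk
  simp [facStart_seg σ ht ht₀, toList_seg σ (ht n.lt_succ_self)]

end Cuts

theorem strictMono_update_zero {α : Type*} [Preorder α] {s : ℕ → α} {a : α} (hs : StrictMono s)
    (ha : a ≤ s 0) : StrictMono (Function.update s 0 a) := by
  refine strictMono_nat_of_lt_succ fun n ↦ ?_
  rw [Function.update_of_ne n.succ_ne_zero]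
  cases n with
  | zero => simpa using ha.trans_lt (hs Nat.zero_lt_one)
  | succ n => simpa using hs n.succ.lt_succ_self

theorem ramseyan_factorisation_exists_general {α κ : Type*} [Finite κ] (color : NStr α → κ)
    (σ : ℕ → α) :
    ∃ τ : ℕ → NStr α, IsFactorisation τ σ ∧ ∃ c : κ, ∀ n ≥ 1, color (τ n) = c := by
  obtain ⟨s, hs, c, hc⟩ := exists_strictMono_monochromatic fun i j ↦ color (seg σ i j)
  let t : ℕ → ℕ := Function.update s 0 0
  have ht : StrictMono t := strictMono_update_zero hs (Nat.zero_le _)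
  have ht₀ : t 0 = 0 := Function.update_self 0 0 s
  have hts {n : ℕ} (hn : n ≠ 0) : t n = s n := Function.update_of_ne hn 0 s
  refine ⟨fun n ↦ seg σ (t n) (t (n + 1)), isFactorisation_seg σ ht ht₀, c, fun n hn ↦ ?_⟩
  simpa only [hts (Nat.ne_of_gt hn), hts n.succ_ne_zero] using hc n (n + 1) n.lt_succ_self

/-- Every sequence over a finite semigroup has a Ramseyan factorisation. -/
theorem ramseyan_factorisation_exists {Γ : Type*} [Fintype Γ] [Semigroup Γ]
    (σ : ℕ → Γ) :
    ∃ τ : ℕ → NStr Γ, IsRamseyanFactorisation τ σ :=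
  ramseyan_factorisation_exists_general col σ

end Buechi
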